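/- arXiv:2401.10117 — 3 statements merged into one kernel-verified Lean document; each statement's English description precedes it below -/
import Mathlib

section
/- Let (U, W, υ, φ) be a topological gluing datum over an index set I, with glued space Q and canonical maps ι i : U i → Q. Then for all i, j ∈ I the images of the overlap pieces compute the intersections: ι i '' (range (υ i j)) = ι j '' (range (υ j i)) = range (ι i) ∩ range (ι j). -/
open Set Function Topology

/-- The gluing relation on the sigma type `Σ i, U i` associated with a gluing datum:
`⟨i, x⟩ ~ ⟨j, y⟩` iff there exists `u : W i j` with `υ i j u = x` and `υ j i (φ i j u) = y`. -/
def glueRel {I : Type*} (U : I → Type*) (W : I → I → Type*)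
    (υ : ∀ i j, W i j → U i) (φ : ∀ i j, W i j → W j i) :
    (Σ i, U i) → (Σ i, U i) → Prop :=
  fun p q => ∃ u : W p.1 q.1, υ p.1 q.1 u = p.2 ∧ υ q.1 p.1 (φ p.1 q.1 u) = q.2

/-- The glued space: the quotient of `Σ i, U i` by the gluing relation, equipped with the
quotient topology. -/
abbrev Glued {I : Type*} (U : I → Type*) (W : I → I → Type*)
    (υ : ∀ i j, W i j → U i) (φ : ∀ i j, W i j → W j i) : Type _ :=
  Quot (glueRel U W υ φ)

/-- The canonical map `U i → Q` into the glued space. -/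
def glueι {I : Type*} (U : I → Type*) (W : I → I → Type*)
    (υ : ∀ i j, W i j → U i) (φ : ∀ i j, W i j → W j i) (i : I) :
    U i → Glued U W υ φ :=
  fun x => Quot.mk _ ⟨i, x⟩

/-!
A point of `range (ι i) ∩ range (ι j)` is the common class of some `⟨i, x⟩` and `⟨j, y⟩`. Since `~`
is already an equivalence relation, equality in the quotient is `~` itself, so a single `u : W i j`
glues `x = υ i j u` to `y`. This identifies `ι i '' range (υ i j)` with an intersection that is
symmetric in `i` and `j`.
-/

section

variable {I : Type*} {U : I → Type*} {W : I → I → Type*}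
  {υ : ∀ i j, W i j → U i} {φ : ∀ i j, W i j → W j i}

theorem glueRel_symm (hφφ : ∀ i j (u : W i j), φ j i (φ i j u) = u)
    {p q : Σ i, U i} (hpq : glueRel U W υ φ p q) : glueRel U W υ φ q p := by
  obtain ⟨u, hp, hq⟩ := hpq
  exact ⟨φ p.1 q.1 u, hq, (congrArg (υ p.1 q.1) (hφφ p.1 q.1 u)).trans hp⟩

theorem glueRel_trans
    (hcoc : ∀ i j k (u : W i j) (v : W j k),
      υ j i (φ i j u) = υ j k v →
      ∃ w : W i k, υ i k w = υ i j u ∧ υ k i (φ i k w) = υ k j (φ j k v))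
    {p q r : Σ i, U i} (hpq : glueRel U W υ φ p q) (hqr : glueRel U W υ φ q r) :
    glueRel U W υ φ p r := by
  obtain ⟨u, hp, hq⟩ := hpq
  obtain ⟨v, hq', hr⟩ := hqr
  obtain ⟨w, hw, hφw⟩ := hcoc p.1 q.1 r.1 u v (hq.trans hq'.symm)
  exact ⟨w, hw.trans hp, hφw.trans hr⟩

theorem glueRel_equivalence
    (hdiag_surj : ∀ i, Surjective (υ i i))
    (hφφ : ∀ i j (u : W i j), φ j i (φ i j u) = u)
    (hcoc : ∀ i j k (u : W i j) (v : W j k),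
      υ j i (φ i j u) = υ j k v →
      ∃ w : W i k, υ i k w = υ i j u ∧ υ k i (φ i k w) = υ k j (φ j k v)) :
    Equivalence (glueRel U W υ φ) where
  refl p := by
    -- `p` is related to some point of `U p.1`, hence to itself by symmetry and transitivity.
    obtain ⟨u, hu⟩ := hdiag_surj p.1 p.2
    have hp : glueRel U W υ φ p ⟨p.1, υ p.1 p.1 (φ p.1 p.1 u)⟩ := ⟨u, hu, rfl⟩
    exact glueRel_trans hcoc hp (glueRel_symm hφφ hp)
  symm := glueRel_symm hφφ
  trans := glueRel_trans hcoc

theorem glueι_eq_glueι_iff (hequiv : Equivalence (glueRel U W υ φ))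
    {i j : I} {x : U i} {y : U j} :
    glueι U W υ φ i x = glueι U W υ φ j y ↔
      ∃ u : W i j, υ i j u = x ∧ υ j i (φ i j u) = y :=
  hequiv.quot_mk_eq_iff ⟨i, x⟩ ⟨j, y⟩

theorem glueι_image_range_eq_inter (hequiv : Equivalence (glueRel U W υ φ)) (i j : I) :
    glueι U W υ φ i '' range (υ i j) =
      range (glueι U W υ φ i) ∩ range (glueι U W υ φ j) := by
  apply Subset.antisymm
  · rintro _ ⟨_, ⟨u, rfl⟩, rfl⟩
    have hglue : glueι U W υ φ i (υ i j u) = glueι U W υ φ j (υ j i (φ i j u)) :=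
      (glueι_eq_glueι_iff hequiv).2 ⟨u, rfl, rfl⟩
    exact ⟨mem_range_self _, υ j i (φ i j u), hglue.symm⟩
  · rintro _ ⟨⟨x, rfl⟩, y, hy⟩
    obtain ⟨u, hx, -⟩ := (glueι_eq_glueι_iff hequiv).1 hy.symm
    exact mem_image_of_mem _ ⟨u, hx⟩

theorem glueι_image_overlap_general
    (hdiag_surj : ∀ i, Surjective (υ i i))
    (hφφ : ∀ i j (u : W i j), φ j i (φ i j u) = u)
    (hcoc : ∀ i j k (u : W i j) (v : W j k),
      υ j i (φ i j u) = υ j k v →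
      ∃ w : W i k, υ i k w = υ i j u ∧ υ k i (φ i k w) = υ k j (φ j k v))
    (i j : I) :
    glueι U W υ φ i '' range (υ i j) = glueι U W υ φ j '' range (υ j i) ∧
    glueι U W υ φ i '' range (υ i j) =
      range (glueι U W υ φ i) ∩ range (glueι U W υ φ j) := by
  have hinter := glueι_image_range_eq_inter (glueRel_equivalence hdiag_surj hφφ hcoc)
  exact ⟨by rw [hinter i j, hinter j i, inter_comm], hinter i j⟩

end

/-- The images of the overlap pieces in the glued space compute the pairwise intersections of
the images of the pieces. -/
theorem glueι_image_overlap {I : Type*}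
    (U : I → Type*) [∀ i, TopologicalSpace (U i)]
    (W : I → I → Type*) [∀ i j, TopologicalSpace (W i j)]
    (υ : ∀ i j, W i j → U i) (φ : ∀ i j, W i j → W j i)
    (hυc : ∀ i j, Continuous (υ i j)) (hφc : ∀ i j, Continuous (φ i j))
    (hdiag_bij : ∀ i, Function.Bijective (υ i i))
    (hdiag : ∀ i (u : W i i), υ i i (φ i i u) = υ i i u)
    (hφφ : ∀ i j (u : W i j), φ j i (φ i j u) = u)
    (hcoc : ∀ i j k (u : W i j) (v : W j k),
      υ j i (φ i j u) = υ j k v →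
      ∃ w : W i k, υ i k w = υ i j u ∧ υ k i (φ i k w) = υ k j (φ j k v))
    (i j : I) :
    glueι U W υ φ i '' (Set.range (υ i j)) = glueι U W υ φ j '' (Set.range (υ j i)) ∧
    glueι U W υ φ i '' (Set.range (υ i j)) =
      Set.range (glueι U W υ φ i) ∩ Set.range (glueι U W υ φ j) := by
  exact glueι_image_overlap_general (fun i => (hdiag_bij i).surjective) hφφ hcoc i j
end

section
/- Let (U, W, υ, φ) be a topological gluing datum over an index set I, with glued space Q and canonical maps ι i : U i → Q. Then Q satisfies the universal property of the glued-up object: for every topological space Q' and every family of continuous maps f i : U i → Q' satisfying f i ∘ (υ i j) = f j ∘ (υ j i) ∘ (φ i j) for all i, j ∈ I, there exists a unique continuous map μ : Q → Q' such that μ ∘ ι i = f i for every i ∈ I. -/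
open Set Function Topology

section

variable {I : Type*} {U : I → Type*} {W : I → I → Type*}
  {υ : ∀ i j, W i j → U i} {φ : ∀ i j, W i j → W j i} {X : Type*}

theorem glueRel.apply_eq {f : ∀ i, U i → X}
    (hf : ∀ i j, f i ∘ υ i j = f j ∘ υ j i ∘ φ i j) {p q : Σ i, U i}
    (h : glueRel U W υ φ p q) : f p.1 p.2 = f q.1 q.2 := by
  obtain ⟨u, hp, hq⟩ := h
  rw [← hp, ← hq]
  exact congrFun (hf p.1 q.1) u

namespace Glued

/-- The map out of the glued space induced by a family of maps on the pieces that agree on the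
overlaps. Since `Quot` passes to the equivalence relation generated by `glueRel`, it is enough that
the family respects `glueRel` itself. -/
def desc (f : ∀ i, U i → X) (hf : ∀ i j, f i ∘ υ i j = f j ∘ υ j i ∘ φ i j) :
    Glued U W υ φ → X :=
  Quot.lift (fun p ↦ f p.1 p.2) fun _ _ ↦ glueRel.apply_eq hf

theorem desc_comp_glueι (f : ∀ i, U i → X)
    (hf : ∀ i j, f i ∘ υ i j = f j ∘ υ j i ∘ φ i j) (i : I) :
    desc f hf ∘ glueι U W υ φ i = f i :=
  rfl

theorem hom_ext {μ ν : Glued U W υ φ → X}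
    (h : ∀ i, μ ∘ glueι U W υ φ i = ν ∘ glueι U W υ φ i) : μ = ν := by
  funext q
  obtain ⟨⟨i, x⟩, rfl⟩ := Quot.exists_rep q
  exact congrFun (h i) x

variable [∀ i, TopologicalSpace (U i)] [TopologicalSpace X]

theorem continuous_iff {μ : Glued U W υ φ → X} :
    Continuous μ ↔ ∀ i, Continuous (μ ∘ glueι U W υ φ i) :=
  isQuotientMap_quot_mk.continuous_iff.trans continuous_sigma_iff

theorem continuous_desc {f : ∀ i, U i → X} (hfc : ∀ i, Continuous (f i))
    (hf : ∀ i j, f i ∘ υ i j = f j ∘ υ j i ∘ φ i j) : Continuous (desc f hf) :=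
  continuous_iff.2 hfc

end Glued

end

theorem glued_universal_property_general {I : Type*}
    (U : I → Type*) [∀ i, TopologicalSpace (U i)] (W : I → I → Type*)
    (υ : ∀ i j, W i j → U i) (φ : ∀ i j, W i j → W j i)
    (Q' : Type*) [TopologicalSpace Q'] (f : ∀ i, U i → Q')
    (hfc : ∀ i, Continuous (f i))
    (hf : ∀ i j, f i ∘ υ i j = f j ∘ υ j i ∘ φ i j) :
    ∃! μ : Glued U W υ φ → Q', Continuous μ ∧ ∀ i, μ ∘ glueι U W υ φ i = f i := by
  refine ⟨Glued.desc f hf, ⟨Glued.continuous_desc hfc hf, Glued.desc_comp_glueι f hf⟩, ?_⟩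
  rintro ν ⟨-, hν⟩
  exact Glued.hom_ext fun i ↦ (hν i).trans (Glued.desc_comp_glueι f hf i).symm

/-- Universal property of the glued space: any compatible family of continuous maps on the
pieces factors uniquely through a continuous map on the glued space. -/
theorem glued_universal_property {I : Type*}
    (U : I → Type*) [∀ i, TopologicalSpace (U i)]
    (W : I → I → Type*) [∀ i j, TopologicalSpace (W i j)]
    (υ : ∀ i j, W i j → U i) (φ : ∀ i j, W i j → W j i)
    (hυc : ∀ i j, Continuous (υ i j)) (hφc : ∀ i j, Continuous (φ i j))
    (hdiag_bij : ∀ i, Function.Bijective (υ i i))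
    (hdiag : ∀ i (u : W i i), υ i i (φ i i u) = υ i i u)
    (hφφ : ∀ i j (u : W i j), φ j i (φ i j u) = u)
    (hcoc : ∀ i j k (u : W i j) (v : W j k),
      υ j i (φ i j u) = υ j k v →
      ∃ w : W i k, υ i k w = υ i j u ∧ υ k i (φ i k w) = υ k j (φ j k v))
    (Q' : Type*) [TopologicalSpace Q'] (f : ∀ i, U i → Q')
    (hfc : ∀ i, Continuous (f i))
    (hf : ∀ i j, (f i) ∘ (υ i j) = (f j) ∘ (υ j i) ∘ (φ i j)) :
    ∃! μ : Glued U W υ φ → Q', Continuous μ ∧ ∀ i, μ ∘ glueι U W υ φ i = f i :=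
  glued_universal_property_general U W υ φ Q' f hfc hf
end

section
/- Let (U, W, υ, φ) be a topological gluing datum over an index set I, with glued space Q and canonical maps ι i : U i → Q. Let Q' be a topological space and f i : U i → Q' a family of continuous injective maps such that: (a) f i ∘ (υ i j) = f j ∘ (υ j i) ∘ (φ i j) for all i, j; (b) Q' = ⋃_{i ∈ I} range (f i); (c) range (f i) ∩ range (f j) = f i '' (range (υ i j)) for all i, j; and (d) the topology of Q' is the final (coinduced) topology with respect to the family {f i}. Then the unique continuous map μ : Q → Q' satisfying μ ∘ ι i = f i for all i is a homeomorphism; in particular Q' is a glued-up object along the gluing datum. -/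
open Set Function Topology

/-!
The maps `f i` assemble into a single map `Σ i, U i → Q'`, which is a quotient map because the
`f i` cover `Q'` and `Q'` carries the final topology. Its fibres are exactly the gluing classes:
if `f i x = f j y`, the intersection condition yields a point of `W i j` over `x`, and injectivity
of `f j` identifies its transition in `U j` with `y`. Hence `μ` is an injective quotient map.
-/

theorem isHomeomorph_of_isQuotientMap_comp_quot_mk {X Y : Type*} [TopologicalSpace X]
    [TopologicalSpace Y] {r : X → X → Prop} {g : Quot r → Y}
    (hg : IsQuotientMap (g ∘ Quot.mk r))
    (hr : ∀ a b, g (Quot.mk r a) = g (Quot.mk r b) → r a b) : IsHomeomorph g := by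
  refine isHomeomorph_iff_isQuotientMap_injective.mpr
    ⟨isQuotientMap_quot_mk.of_comp_isQuotientMap hg, ?_⟩
  rintro ⟨a⟩ ⟨b⟩ hab
  exact Quot.sound (hr a b hab)

section

variable {I : Type*} {U : I → Type*} {Y : Type*} {f : ∀ i, U i → Y}

theorem isQuotientMap_sigma_iff [∀ i, TopologicalSpace (U i)] [tY : TopologicalSpace Y] :
    IsQuotientMap (fun p : Σ i, U i => f p.1 p.2) ↔
      tY = (⨆ i, TopologicalSpace.coinduced (f i) inferInstance) ∧
        (⋃ i, range (f i)) = univ := by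
  rw [isQuotientMap_iff, isCoinducing_iff', ← range_eq_univ, range_sigma_eq_iUnion_range]
  simp only [instTopologicalSpaceSigma, coinduced_iSup, coinduced_compose, comp_def]

theorem glueRel_iff_apply_eq {W : I → I → Type*} {υ : ∀ i j, W i j → U i}
    {φ : ∀ i j, W i j → W j i} (hf : ∀ i, Injective (f i))
    (hcompat : ∀ i j, f i ∘ υ i j = f j ∘ υ j i ∘ φ i j)
    (hinter : ∀ i j, range (f i) ∩ range (f j) ⊆ f i '' range (υ i j)) (p q : Σ i, U i) :
    glueRel U W υ φ p q ↔ f p.1 p.2 = f q.1 q.2 := by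
  obtain ⟨i, x⟩ := p
  obtain ⟨j, y⟩ := q
  change (∃ u : W i j, υ i j u = x ∧ υ j i (φ i j u) = y) ↔ f i x = f j y
  constructor
  · rintro ⟨u, rfl, rfl⟩
    exact congrFun (hcompat i j) u
  · intro hxy
    obtain ⟨_, ⟨u, rfl⟩, hu⟩ := hinter i j ⟨mem_range_self x, y, hxy.symm⟩
    refine ⟨u, hf i hu, hf j ?_⟩
    calc
      f j (υ j i (φ i j u)) = f i (υ i j u) := (congrFun (hcompat i j) u).symm
      _ = f i x := hu
      _ = f j y := hxy

end

theorem glued_recognition_general {I : Type*}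
    (U : I → Type*) [∀ i, TopologicalSpace (U i)] (W : I → I → Type*)
    (υ : ∀ i j, W i j → U i) (φ : ∀ i j, W i j → W j i)
    (Q' : Type*) [tQ' : TopologicalSpace Q'] (f : ∀ i, U i → Q')
    (hfinj : ∀ i, Injective (f i))
    (ha : ∀ i j, f i ∘ υ i j = f j ∘ υ j i ∘ φ i j)
    (hb : (⋃ i, range (f i)) = univ)
    (hc : ∀ i j, range (f i) ∩ range (f j) ⊆ f i '' range (υ i j))
    (hd : tQ' = ⨆ i, TopologicalSpace.coinduced (f i) inferInstance)
    (μ : Glued U W υ φ → Q') (hμ : ∀ i, μ ∘ glueι U W υ φ i = f i) :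
    IsHomeomorph μ := by
  have comp_mk : μ ∘ Quot.mk _ = fun p : Σ i, U i => f p.1 p.2 :=
    funext fun p => congrFun (hμ p.1) p.2
  have quotientMap : IsQuotientMap (μ ∘ Quot.mk _) :=
    comp_mk ▸ isQuotientMap_sigma_iff.mpr ⟨hd, hb⟩
  refine isHomeomorph_of_isQuotientMap_comp_quot_mk quotientMap fun p q hpq => ?_
  rw [glueRel_iff_apply_eq hfinj ha hc]
  exact (congrFun comp_mk p).symm.trans (hpq.trans (congrFun comp_mk q))

/-- Recognition theorem for glued-up objects: if `Q'` carries a compatible family of continuous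
injective maps whose images cover `Q'`, whose pairwise intersections are computed by the
overlaps, and whose topology is the final topology for the family, then the canonical map from
the glued space to `Q'` is a homeomorphism. -/
theorem glued_recognition {I : Type*}
    (U : I → Type*) [∀ i, TopologicalSpace (U i)]
    (W : I → I → Type*) [∀ i j, TopologicalSpace (W i j)]
    (υ : ∀ i j, W i j → U i) (φ : ∀ i j, W i j → W j i)
    (hυc : ∀ i j, Continuous (υ i j)) (hφc : ∀ i j, Continuous (φ i j))
    (hdiag_bij : ∀ i, Function.Bijective (υ i i))
    (hdiag : ∀ i (u : W i i), υ i i (φ i i u) = υ i i u)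
    (hφφ : ∀ i j (u : W i j), φ j i (φ i j u) = u)
    (hcoc : ∀ i j k (u : W i j) (v : W j k),
      υ j i (φ i j u) = υ j k v →
      ∃ w : W i k, υ i k w = υ i j u ∧ υ k i (φ i k w) = υ k j (φ j k v))
    (Q' : Type*) [tQ' : TopologicalSpace Q'] (f : ∀ i, U i → Q')
    (hfc : ∀ i, Continuous (f i))
    (hfinj : ∀ i, Function.Injective (f i))
    (ha : ∀ i j, (f i) ∘ (υ i j) = (f j) ∘ (υ j i) ∘ (φ i j))
    (hb : (⋃ i, Set.range (f i)) = Set.univ)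
    (hc : ∀ i j, Set.range (f i) ∩ Set.range (f j) = f i '' (Set.range (υ i j)))
    (hd : tQ' = ⨆ i, TopologicalSpace.coinduced (f i) inferInstance)
    (μ : Glued U W υ φ → Q') (hμc : Continuous μ)
    (hμ : ∀ i, μ ∘ glueι U W υ φ i = f i) :
    IsHomeomorph μ :=
  glued_recognition_general U W υ φ Q' f hfinj ha hb (fun i j => (hc i j).subset) hd μ hμ
end
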